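/- The following two statements are equivalent. (A) (the 2^k Conjecture) For every k and every loosely schedulable Pinwheel Scheduling instance a with k tasks, a admits a valid schedule with gap frequency 2^k. (B) (the Kernel Conjecture) For every k ≥ 1 and every schedulable Pinwheel Scheduling instance a with k tasks, there exists a schedulable k-task instance a' with a' i ≤ a i and a' i ≤ 2^(k-1) for all i. -/

import Mathlib

/-- A schedule `S` is valid for the Pinwheel Scheduling instance `a` if every task `i`
is executed at least once in every window of `a i` consecutive days. -/
def IsValidSchedule {k : ℕ} (a : Fin k → ℕ) (S : ℕ → Option (Fin k)) : Prop :=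
  ∀ i : Fin k, ∀ t : ℕ, ∃ t', t ≤ t' ∧ t' < t + a i ∧ S t' = some i

/-- A Pinwheel Scheduling instance is schedulable if some valid schedule exists. -/
def Schedulable {k : ℕ} (a : Fin k → ℕ) : Prop :=
  ∃ S : ℕ → Option (Fin k), IsValidSchedule a S

/-- The schedule `S` contains a holiday in every window of `g` consecutive days. -/
def HasGapFrequency {k : ℕ} (S : ℕ → Option (Fin k)) (g : ℕ) : Prop :=
  ∀ t : ℕ, ∃ t', t ≤ t' ∧ t' < t + g ∧ S t' = none

/-- `a` is loosely schedulable: it admits a valid schedule with some gap frequency `g ≥ 1`. -/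
def LooselySchedulable {k : ℕ} (a : Fin k → ℕ) : Prop :=
  ∃ (S : ℕ → Option (Fin k)) (g : ℕ), 1 ≤ g ∧ IsValidSchedule a S ∧ HasGapFrequency S g

/-!
A holiday is one more task: declaring the holidays to be executions of a new task of frequency `g`
turns a valid schedule with gap frequency `g` into a valid schedule of the instance enlarged by
that task, and deleting a task turns its executions back into holidays. Hence a bound on gap
frequencies for `k` tasks lets one lower, one task at a time, every frequency of a schedulable
instance with `k + 1` tasks to that bound; conversely, lowering the frequency of the added task
lowers the gap frequency.
-/

open Function

/-- The value `x` occurs in every window of `g` consecutive days of `S`. Taking `x = some i` or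
`x = none` treats the executions of a task and the holidays alike. -/
def OccursEvery {α : Type*} (S : ℕ → α) (g : ℕ) (x : α) : Prop :=
  ∀ t, ∃ t', t ≤ t' ∧ t' < t + g ∧ S t' = x

section OccursEvery

variable {α β : Type*} {S : ℕ → α} {g g' : ℕ} {x : α}

theorem OccursEvery.mono (h : OccursEvery S g x) (hg : g ≤ g') : OccursEvery S g' x := fun t ↦
  let ⟨t', ht, htg, hx⟩ := h t
  ⟨t', ht, htg.trans_le (Nat.add_le_add_left hg t), hx⟩

theorem OccursEvery.comp_left (f : α → β) (h : OccursEvery S g x) :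
    OccursEvery (f ∘ S) g (f x) := fun t ↦
  let ⟨t', ht, htg, hx⟩ := h t
  ⟨t', ht, htg, congrArg f hx⟩

end OccursEvery

theorem isValidSchedule_iff_occursEvery {k : ℕ} {a : Fin k → ℕ} {S : ℕ → Option (Fin k)} :
    IsValidSchedule a S ↔ ∀ i, OccursEvery S (a i) (some i) :=
  Iff.rfl

theorem hasGapFrequency_iff_occursEvery {k g : ℕ} {S : ℕ → Option (Fin k)} :
    HasGapFrequency S g ↔ OccursEvery S g none :=
  Iff.rfl

theorem Schedulable.mono {k : ℕ} {a b : Fin k → ℕ} (ha : Schedulable a) (hab : a ≤ b) :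
    Schedulable b :=
  let ⟨S, hS⟩ := ha
  ⟨S, isValidSchedule_iff_occursEvery.2 fun i ↦
    (isValidSchedule_iff_occursEvery.1 hS i).mono (hab i)⟩

section InsertNth

variable {k g : ℕ} {a : Fin k → ℕ}

theorem isValidSchedule_insertNth_iff {i : Fin (k + 1)} {S : ℕ → Option (Fin (k + 1))} :
    IsValidSchedule (i.insertNth (α := fun _ ↦ ℕ) g a) S ↔
      OccursEvery S g (some i) ∧ ∀ j, OccursEvery S (a j) (some (i.succAbove j)) := by
  simp only [isValidSchedule_iff_occursEvery, Fin.forall_iff_succAbove i,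
    Fin.insertNth_apply_same, Fin.insertNth_apply_succAbove]

theorem schedulable_insertNth_iff (i : Fin (k + 1)) :
    Schedulable (i.insertNth (α := fun _ ↦ ℕ) g a) ↔
      ∃ S : ℕ → Option (Fin k), IsValidSchedule a S ∧ HasGapFrequency S g := by
  simp only [Schedulable, isValidSchedule_insertNth_iff]
  simp only [isValidSchedule_iff_occursEvery, hasGapFrequency_iff_occursEvery]
  constructor
  · rintro ⟨S, hi, hS⟩
    let deleteTask (o : Option (Fin (k + 1))) : Option (Fin k) := o.bind (finSuccEquiv' i)
    refine ⟨deleteTask ∘ S, fun j ↦ ?_, ?_⟩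
    · simpa [deleteTask] using (hS j).comp_left deleteTask
    · simpa [deleteTask] using hi.comp_left deleteTask
  · rintro ⟨S, hS, hnone⟩
    let fillHoliday (o : Option (Fin k)) : Option (Fin (k + 1)) := some ((finSuccEquiv' i).symm o)
    refine ⟨fillHoliday ∘ S, ?_, fun j ↦ ?_⟩
    · simpa [fillHoliday] using hnone.comp_left fillHoliday
    · simpa [fillHoliday] using (hS j).comp_left fillHoliday

theorem looselySchedulable_iff_exists_schedulable_insertNth (i : Fin (k + 1)) :
    LooselySchedulable a ↔ ∃ g, 1 ≤ g ∧ Schedulable (i.insertNth (α := fun _ ↦ ℕ) g a) := by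
  simp only [LooselySchedulable, schedulable_insertNth_iff]
  grind

end InsertNth

theorem map_of_forall_update {ι : Type*} [Finite ι] [DecidableEq ι] {α : ι → Type*}
    {p : (∀ i, α i) → Prop} (f : ∀ i, α i → α i)
    (hp : ∀ b i, p b → p (update b i (f i (b i)))) {a : ∀ i, α i} (ha : p a) :
    p (Pi.map f a) := by
  have := Fintype.ofFinite ι
  suffices ∀ s : Finset ι, p (s.piecewise (Pi.map f a) a) by
    simpa using this Finset.univ
  intro s
  induction s using Finset.induction_on with
  | empty => simpa using ha
  | insert i s hi ih => simpa [Finset.piecewise_insert, hi] using hp _ i ih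

/-- Every loosely schedulable instance with `k` tasks has a valid schedule with gap frequency `g`.
The `2^k` Conjecture says that `2 ^ k` has this property for all `k`. -/
def IsUniversalGapFrequency (k g : ℕ) : Prop :=
  ∀ a : Fin k → ℕ, LooselySchedulable a →
    ∃ S : ℕ → Option (Fin k), IsValidSchedule a S ∧ HasGapFrequency S g

section IsUniversalGapFrequency

variable {k g : ℕ} {a : Fin (k + 1) → ℕ}

theorem Schedulable.update_min (ha : Schedulable a) (hgap : IsUniversalGapFrequency k g)
    (i : Fin (k + 1)) :
    Schedulable (update a i (min (a i) g)) := by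
  obtain hle | hlt := le_or_gt (a i) g
  · simpa [hle] using ha
  · have hloose : LooselySchedulable (i.removeNth a) :=
      (looselySchedulable_iff_exists_schedulable_insertNth i).2
        ⟨a i, Nat.one_le_of_lt hlt, by simpa using ha⟩
    have hupdate := (schedulable_insertNth_iff i).2 (hgap _ hloose)
    rwa [Fin.insertNth_removeNth, ← min_eq_right hlt.le] at hupdate

theorem Schedulable.min_right (ha : Schedulable a) (hgap : IsUniversalGapFrequency k g) :
    Schedulable fun i ↦ min (a i) g :=
  map_of_forall_update (fun _ x ↦ min x g) (fun _ i hb ↦ hb.update_min hgap i) ha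

end IsUniversalGapFrequency

theorem two_pow_conjecture_iff_kernel_conjecture_general (k g : ℕ) :
    IsUniversalGapFrequency k g ↔
      ∀ a : Fin (k + 1) → ℕ, Schedulable a →
        ∃ a' : Fin (k + 1) → ℕ, Schedulable a' ∧ ∀ i, a' i ≤ a i ∧ a' i ≤ g := by
  constructor
  · intro hgap a ha
    exact ⟨fun i ↦ min (a i) g, ha.min_right hgap, fun i ↦ ⟨min_le_left _ _, min_le_right _ _⟩⟩
  · intro hkernel a ha
    obtain ⟨_, -, hinsert⟩ := (looselySchedulable_iff_exists_schedulable_insertNth 0).1 ha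
    obtain ⟨a', ha', hle⟩ := hkernel _ hinsert
    rw [← schedulable_insertNth_iff 0]
    exact ha'.mono <| Fin.le_insertNth_iff.2
      ⟨(hle 0).2, fun j ↦ by simpa using (hle (Fin.succAbove 0 j)).1⟩

theorem two_pow_conjecture_iff_kernel_conjecture :
    (∀ (k : ℕ) (a : Fin k → ℕ), LooselySchedulable a →
      ∃ S : ℕ → Option (Fin k), IsValidSchedule a S ∧ HasGapFrequency S (2 ^ k)) ↔
    (∀ (k : ℕ), 1 ≤ k → ∀ a : Fin k → ℕ, Schedulable a →
      ∃ a' : Fin k → ℕ, Schedulable a' ∧ ∀ i, a' i ≤ a i ∧ a' i ≤ 2 ^ (k - 1)) := by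
  exact (forall_congr' fun k ↦ two_pow_conjecture_iff_kernel_conjecture_general k (2 ^ k)).trans
    ⟨fun h ↦ fun | k + 1, _ => h k, fun h k ↦ h (k + 1) k.succ_pos⟩
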